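/- arXiv:2501.12509 — 3 statements merged into one kernel-verified Lean document; each statement's English description precedes it below -/
import Mathlib

section
/- Let R be a ring and let a ≤ b be integers with b ≥ 0. Let P_* be a chain complex of left R-modules of type FP with P_i = 0 for all i outside the interval [a,b], and suppose H_i(P_*) = 0 for all i < 0. Then P_* is chain homotopy equivalent to a chain complex C_* of left R-modules of type FP with C_i = 0 for all i outside [0,b]. -/
open CategoryTheory CategoryTheory.Limits

/-!
Strip the bottom term of `P` while it lies in negative degree. If `P` is zero below degree
`m < 0` and `H_m(P) = 0`, then `d : P_{m+1} → P_m` is surjective, hence has a section `s` because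
`P_m` is projective. Regard `s` as a degree-one map with a single nonzero component; then
`f = d s + s d` is a null-homotopic idempotent endomorphism of `P` which is the identity in degree
`m`, a projection in degree `m + 1`, and zero elsewhere. The complementary idempotent `1 - f` is
homotopic to the identity, so splitting it in the abelian category of complexes gives a complex
homotopy equivalent to `P`, zero in degree `m`, all of whose terms are retracts of those of `P`
(`exists_strip_bottom`). Homology is a homotopy invariant, so this can be iterated until the
support starts in degree `0` (`exists_strip_many`).
-/

/-- One stripping step. The terms of the smaller complex are recorded only as retracts of the terms
of `P`; finiteness, projectivity and vanishing are all inherited by retracts. -/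
lemma exists_strip_bottom {R : Type*} [Ring R] (P : ChainComplex (ModuleCat R) ℤ) (m : ℤ)
    (hproj : Module.Projective R (P.X m)) (hsupp : ∀ i : ℤ, i < m → IsZero (P.X i))
    (hH : IsZero (P.homology m)) :
    ∃ C : ChainComplex (ModuleCat R) ℤ,
      (∀ i, Nonempty (Retract (C.X i) (P.X i))) ∧ IsZero (C.X m) ∧
        Nonempty (HomotopyEquiv P C) := by
  have hex : P.ExactAt m := (P.exactAt_iff_isZero_homology m).2 hH
  rw [P.exactAt_iff' (m + 1) m (m - 1) (by simp) (by simp),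
    ShortComplex.moduleCat_exact_iff] at hex
  have hsurj : Function.Surjective (P.d (m + 1) m).hom := by
    intro y
    have h0 : P.d m (m - 1) = 0 := (hsupp (m - 1) (by lia)).eq_of_tgt _ _
    exact hex y (LinearMap.congr_fun (congrArg ModuleCat.Hom.hom h0) y)
  obtain ⟨s₀, hs₀⟩ :=
    Module.projective_lifting_property (P.d (m + 1) m).hom LinearMap.id hsurj
  have hs : ∀ i j : ℤ, ∃ s : P.X i ⟶ P.X j,
      (i = m → j = m + 1 → s ≫ P.d j i = 𝟙 _) ∧ (i ≠ m → s = 0) := by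
    intro i j
    by_cases h : i = m ∧ j = m + 1
    · obtain ⟨rfl, rfl⟩ := h
      refine ⟨ModuleCat.ofHom s₀, fun _ _ => ?_, fun h => absurd rfl h⟩
      ext x
      exact LinearMap.congr_fun hs₀ x
    · exact ⟨0, fun h₁ h₂ => absurd ⟨h₁, h₂⟩ h, fun _ => rfl⟩
  choose s hs₁ hs₂ using hs
  let f : P ⟶ P := Homotopy.nullHomotopicMap' fun i j _ => s i j
  have hf : ∀ i, f.f i = P.d i (i - 1) ≫ s (i - 1) i + s i (i + 1) ≫ P.d (i + 1) i := fun i =>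
    Homotopy.nullHomotopicMap'_f (k₂ := i + 1) (k₁ := i) (k₀ := i - 1) (by simp) (by simp) _
  have hfm : f.f m = 𝟙 _ := by
    rw [hf, hs₂ (m - 1) m (by lia), hs₁ m _ rfl rfl]
    simp
  have hff : f ≫ f = f := by
    ext1 i
    rw [HomologicalComplex.comp_f]
    by_cases h₁ : i = m
    · subst h₁
      rw [hfm, Category.comp_id]
    by_cases h₂ : i - 1 = m
    · rw [hf, hs₂ i _ h₁]
      have := hs₁ (i - 1) i h₂ (by lia)
      simp [reassoc_of% this]
    · rw [hf, hs₂ i _ h₁, hs₂ (i - 1) _ h₂]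
      simp
  obtain ⟨C, ι, π, hι, hπ⟩ := IsIdempotentComplete.idempotents_split P (𝟙 P - f)
    (by simp [hff])
  have hι' : ∀ i, ι.f i ≫ π.f i = 𝟙 _ := fun i => by
    rw [← HomologicalComplex.comp_f, hι, HomologicalComplex.id_f]
  refine ⟨C, fun i => ⟨⟨ι.f i, π.f i, hι' i⟩⟩, ?_, ⟨⟨π, ι, ?_, Homotopy.ofEq hι⟩⟩⟩
  · have hz : π.f m ≫ ι.f m = 0 := by
      rw [← HomologicalComplex.comp_f, hπ, HomologicalComplex.sub_f_apply, hfm]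
      simp
    rw [IsZero.iff_id_eq_zero]
    calc 𝟙 (C.X m) = ι.f m ≫ (π.f m ≫ ι.f m) ≫ π.f m := by
          simp [hι']
      _ = 0 := by simp [hz]
  · refine (Homotopy.ofEq hπ).trans ?_
    have hf0 : Homotopy f 0 := Homotopy.nullHomotopy' fun i j _ => s i j
    exact (Homotopy.equivSubZero.symm
      ((Homotopy.ofEq (sub_sub_cancel (𝟙 P) f)).trans hf0)).symm

/-- Iterated stripping, with the bottom of the support measured as `-n`. -/
lemma exists_strip_many {R : Type*} [Ring R] (b : ℤ) (n : ℕ) :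
    ∀ P : ChainComplex (ModuleCat R) ℤ,
      (∀ i : ℤ, Module.Projective R (P.X i)) →
      (∀ i : ℤ, Module.Finite R (P.X i)) →
      (∀ i : ℤ, i < -n ∨ b < i → IsZero (P.X i)) →
      (∀ i : ℤ, i < 0 → IsZero (P.homology i)) →
      ∃ C : ChainComplex (ModuleCat R) ℤ,
        (∀ i : ℤ, Module.Projective R (C.X i)) ∧
        (∀ i : ℤ, Module.Finite R (C.X i)) ∧
        (∀ i : ℤ, i < 0 ∨ b < i → IsZero (C.X i)) ∧
        Nonempty (HomotopyEquiv P C) := by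
  induction n with
  | zero =>
    intro P hproj hfin hsupp _
    exact ⟨P, hproj, hfin, by simpa using hsupp, ⟨HomotopyEquiv.refl P⟩⟩
  | succ n ih =>
    intro P hproj hfin hsupp hH
    obtain ⟨C, hret, hzero, ⟨e⟩⟩ := exists_strip_bottom P (-(n + 1 : ℕ)) (hproj _)
      (fun i hi => hsupp i (Or.inl hi)) (hH _ (by lia))
    have hsplit : ∀ i, ∃ (ι : C.X i →ₗ[R] P.X i) (π : P.X i →ₗ[R] C.X i),
        π ∘ₗ ι = LinearMap.id := fun i => by
      obtain ⟨r⟩ := hret i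
      exact ⟨r.i.hom, r.r.hom, by rw [← ModuleCat.hom_comp, r.retract, ModuleCat.hom_id]⟩
    obtain ⟨D, hD₁, hD₂, hD₃, ⟨e'⟩⟩ := ih C
      (fun i => by
        obtain ⟨ι, π, h⟩ := hsplit i
        have := hproj i
        exact Module.Projective.of_split ι π h)
      (fun i => by
        obtain ⟨ι, π, h⟩ := hsplit i
        have := hfin i
        exact Module.Finite.of_surjective π fun x => ⟨ι x, LinearMap.congr_fun h x⟩)
      (fun i hi => by
        by_cases him : i = -(n + 1 : ℕ)
        · exact him ▸ hzero
        · obtain ⟨r⟩ := hret i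
          exact (hsupp i (by lia)).of_mono r.i)
      (fun i hi => (hH i hi).of_iso (e.toHomologyIso i).symm)
    exact ⟨D, hD₁, hD₂, hD₃, ⟨e.trans e'⟩⟩

/-- Let `R` be a ring, `a ≤ b` integers with `b ≥ 0`, and `P` a chain
complex of left `R`-modules of type FP (each term finitely generated projective, only
finitely many nonzero) supported in `[a, b]`, with `H_i(P) = 0` for `i < 0`.  Then `P` is
chain homotopy equivalent to a chain complex of type FP supported in `[0, b]`. -/
theorem chainComplex_nonneg_homology_supported
    {R : Type*} [Ring R] (a b : ℤ) (hab : a ≤ b) (hb : 0 ≤ b)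
    (P : ChainComplex (ModuleCat R) ℤ)
    (hproj : ∀ i : ℤ, Module.Projective R (P.X i))
    (hfin : ∀ i : ℤ, Module.Finite R (P.X i))
    (hsupp : ∀ i : ℤ, i < a ∨ b < i → IsZero (P.X i))
    (hH : ∀ i : ℤ, i < 0 → IsZero (P.homology i)) :
    ∃ C : ChainComplex (ModuleCat R) ℤ,
      (∀ i : ℤ, Module.Projective R (C.X i)) ∧
      (∀ i : ℤ, Module.Finite R (C.X i)) ∧
      (∀ i : ℤ, i < 0 ∨ b < i → IsZero (C.X i)) ∧
      Nonempty (HomotopyEquiv P C) :=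
  exists_strip_many b a.natAbs P hproj hfin (fun i hi => hsupp i (by lia)) hH
end

section
/- Let π be a group and N ≥ 1 an integer. Let P_* be a chain complex of left ℤπ-modules of type FP with P_i = 0 for all i outside [0,N], and suppose H_0(P_*) is infinite cyclic as an abelian group. Then P_* is chain homotopy equivalent to a chain complex C_* of left ℤπ-modules of type FP with C_i = 0 for all i outside [0,N] and with C_0 a free ℤπ-module of rank 1. -/
/-!
Write `Λ = ℤπ`. As `H₀(P) ≅ ℤ` is generated by one element already as an abelian group, there is
`x₀ ∈ P₀` with `P₀ = im d₁ + Λ x₀` (`exists_generator_mod_boundaries`). Let `f : Λ → P₀` send `1`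
to `x₀`, and let `K = P₁ ×_{P₀} Λ` be the pullback of `d₁` and `f`. Then

  `⋯ → P₃ → P₂ → K → Λ → 0`

is the required complex. Indeed `(d₁, f) : P₁ ⊕ Λ → P₀` is surjective onto a projective module, so
it has a section `(a, b)`; hence its kernel, which is isomorphic to `K`, is a direct summand of
`P₁ ⊕ Λ` and so is finitely generated projective. The same `a` and `b` give an explicit homotopy
inverse of the map to `P` which is `f` in degree `0`, the projection `K → P₁` in degree `1` and
the identity above, with homotopies concentrated in degree `0`. This last part
(`exists_homotopyEquiv_replaceBottom`) works in any preadditive category.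

The group `π` and the modules `Pᵢ` may live in different universes. To have a copy of `Λ` in the
universe of the `Pᵢ`, one uses that a nonzero projective `Λ`-module has cardinality large enough to
force `π` to be small (`small_of_nontrivial_projective`).
-/

open CategoryTheory CategoryTheory.Limits

universe v u

/-! ### Replacing the bottom of a complex by a pullback -/

section Categorical

variable {V : Type u} [Category.{v} V] [Preadditive V]

/-- The objects of `⋯ → P₃ → P₂ → K → L → P₋₁ → ⋯`. The negative part is kept as it is in `P`;
it is zero in the application. -/
def replaceX (P : ChainComplex V ℤ) (K L : V) : ℤ → V
  | 0 => L
  | 1 => K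
  | Int.ofNat (n + 2) => P.X (Int.ofNat (n + 2))
  | Int.negSucc n => P.X (Int.negSucc n)

/-- The differentials of `⋯ → P₃ → P₂ → K → L`, given by `j : P₂ → K` and `q : K → L`, and zero
in negative degrees. -/
def replaceD (P : ChainComplex V ℤ) {K L : V} (q : K ⟶ L) (j : P.X 2 ⟶ K) :
    ∀ i : ℤ, replaceX P K L (i + 1) ⟶ replaceX P K L i
  | 0 => q
  | 1 => j
  | Int.ofNat (n + 2) => P.d (Int.ofNat (n + 2 + 1)) (Int.ofNat (n + 2))
  | Int.negSucc _ => 0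

/-- The complex `⋯ → P₃ → P₂ → K → L`, obtained from `P` by changing the objects in degrees
`0` and `1`. -/
def replaceBottom (P : ChainComplex V ℤ) {K L : V} (q : K ⟶ L) (j : P.X 2 ⟶ K)
    (hjq : j ≫ q = 0) (hj : P.d 3 2 ≫ j = 0) : ChainComplex V ℤ :=
  ChainComplex.of (replaceX P K L) (replaceD P q j) <| by
    rintro ((_ | _ | n) | n)
    · exact hjq
    · exact hj
    · exact P.d_comp_d _ _ _
    · exact comp_zero

/-- The components of a map from `P` to a complex with objects `replaceX P K L`: the given ones
in degrees `0` and `1`, identities elsewhere. -/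
def toReplace {P : ChainComplex V ℤ} {K L : V} (b : P.X 0 ⟶ L) (r : P.X 1 ⟶ K) :
    ∀ i : ℤ, P.X i ⟶ replaceX P K L i
  | 0 => b
  | 1 => r
  | Int.ofNat (n + 2) => 𝟙 (P.X (Int.ofNat (n + 2)))
  | Int.negSucc n => 𝟙 (P.X (Int.negSucc n))

/-- The components of a map to `P` from a complex with objects `replaceX P K L`: the given ones
in degrees `0` and `1`, identities elsewhere. -/
def ofReplace {P : ChainComplex V ℤ} {K L : V} (f : L ⟶ P.X 0) (p : K ⟶ P.X 1) :
    ∀ i : ℤ, replaceX P K L i ⟶ P.X i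
  | 0 => f
  | 1 => p
  | Int.ofNat (n + 2) => 𝟙 (P.X (Int.ofNat (n + 2)))
  | Int.negSucc n => 𝟙 (P.X (Int.negSucc n))

/-- The family of degree `1` maps concentrated in degree `0`, where it is `h`. -/
def bottomHomotopy {X Y : ℤ → V} (h : X 0 ⟶ Y 1) : ∀ i : ℤ, X i ⟶ Y (i + 1)
  | 0 => h
  | Int.ofNat (_ + 1) => 0
  | Int.negSucc _ => 0

/-- `bottomHomotopy`, with its target indexed by any `k` related to `i` in the complex shape, as
`Homotopy.nullHomotopicMap'` requires. -/
def bottomFamily {C D : ChainComplex V ℤ} (h : C.X 0 ⟶ D.X 1) (i k : ℤ)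
    (r : (ComplexShape.down ℤ).Rel k i) : C.X i ⟶ D.X k :=
  bottomHomotopy (X := C.X) (Y := D.X) h i ≫ eqToHom (congrArg D.X r)

/-- The null homotopic map `d h + h d`, in a form whose right side reduces definitionally in each
degree. -/
theorem nullHomotopicMap_bottomFamily {C D : ChainComplex V ℤ} (h : C.X 0 ⟶ D.X 1) (i : ℤ) :
    (Homotopy.nullHomotopicMap' (bottomFamily h)).f (i + 1) =
      C.d (i + 1) i ≫ bottomHomotopy (X := C.X) (Y := D.X) h i +
        bottomHomotopy (X := C.X) (Y := D.X) h (i + 1) ≫ D.d (i + 1 + 1) (i + 1) := by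
  rw [Homotopy.nullHomotopicMap'_f (k₂ := i + 1 + 1) (k₀ := i) (ComplexShape.down_mk _ _ rfl)
    (ComplexShape.down_mk _ _ rfl)]
  simp [bottomFamily]

/-- If `K` is the pullback of `d : P₁ → P₀` and `f : L → P₀`, and `(d, f) : P₁ ⊕ L → P₀` has a
section `(a, b)`, then `P` is homotopy equivalent to `⋯ → P₃ → P₂ → K → L`. -/
theorem exists_homotopyEquiv_replaceBottom (P : ChainComplex V ℤ)
    (hneg : ∀ i < 0, IsZero (P.X i)) {K L : V} {p : K ⟶ P.X 1} {q : K ⟶ L} {f : L ⟶ P.X 0}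
    (sq : IsPullback p q (P.d 1 0) f) (a : P.X 0 ⟶ P.X 1) (b : P.X 0 ⟶ L)
    (hab : a ≫ P.d 1 0 + b ≫ f = 𝟙 _) :
    ∃ C : ChainComplex V ℤ, C.X = replaceX P K L ∧ Nonempty (HomotopyEquiv P C) := by
  let j : P.X 2 ⟶ K := sq.lift (P.d 2 1) 0 (by simp)
  have hjp : j ≫ p = P.d 2 1 := sq.lift_fst _ _ _
  have hjq : j ≫ q = 0 := sq.lift_snd _ _ _
  have hj : P.d 3 2 ≫ j = 0 := sq.hom_ext (by simp [hjp]) (by simp [hjq])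
  have hab' : b ≫ f = 𝟙 _ - a ≫ P.d 1 0 := by rw [← hab]; abel
  -- The homotopy inverse is `b` in degree `0` and `r = (1 - a d, b d)` in degree `1`.
  let r : P.X 1 ⟶ K := sq.lift (𝟙 _ - P.d 1 0 ≫ a) (P.d 1 0 ≫ b) (by simp [hab'])
  have hrp : r ≫ p = 𝟙 _ - P.d 1 0 ≫ a := sq.lift_fst _ _ _
  have hrq : r ≫ q = P.d 1 0 ≫ b := sq.lift_snd _ _ _
  -- The homotopy on the new complex is `h = (a f, 1 - b f)`; the one on `P` is `a`.
  let h : L ⟶ K := sq.lift (f ≫ a) (𝟙 _ - f ≫ b) (by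
    simp only [Category.assoc, Preadditive.sub_comp, hab', Preadditive.comp_sub,
      Category.comp_id, Category.id_comp]; abel)
  have hhp : h ≫ p = f ≫ a := sq.lift_fst _ _ _
  have hhq : h ≫ q = 𝟙 _ - f ≫ b := sq.lift_snd _ _ _
  -- The chain map condition for the homotopy inverse in degree `2`.
  have hj2 : P.d 2 1 ≫ r = j := sq.hom_ext
    (by simp [hrp, hjp]) (by simp [hrq, hjq])
  let C := replaceBottom P q j hjq hj
  have hd (i : ℤ) : C.d (i + 1) i = replaceD P q j i := ChainComplex.of_d _ _ _
  let G : P ⟶ C :=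
    { f := toReplace b r
      comm' := by
        rintro _ i rfl
        rw [hd]
        match i with
        | 0 => exact hrq
        | 1 => exact (hj2.trans (Category.id_comp _).symm).symm
        | Int.ofNat (n + 2) => exact (Category.id_comp _).trans (Category.comp_id _).symm
        | Int.negSucc n => exact (hneg _ (Int.negSucc_lt_zero n)).eq_of_tgt _ _ }
  let F : C ⟶ P :=
    { f := ofReplace f p
      comm' := by
        rintro _ i rfl
        rw [hd]
        match i with
        | 0 => exact sq.w
        | 1 => exact (Category.id_comp _).trans hjp.symm
        | Int.ofNat (n + 2) => exact (Category.id_comp _).trans (Category.comp_id _).symm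
        | Int.negSucc n => exact (hneg _ (Int.negSucc_lt_zero n)).eq_of_tgt _ _ }
  refine ⟨C, rfl, ⟨⟨G, F, ?_, ?_⟩⟩⟩
  · refine (Homotopy.equivSubZero.symm (Homotopy.trans (Homotopy.ofEq ?_)
      (Homotopy.nullHomotopy' (bottomFamily (C := P) (D := P) a)))).symm
    ext i
    -- Indexing by `i + 1` makes both neighbouring differentials of the form `d (k + 1) k`.
    obtain ⟨i, rfl⟩ : ∃ k, i = k + 1 := ⟨i - 1, by ring⟩
    rw [nullHomotopicMap_bottomFamily]
    match i with
    | 0 =>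
      change 𝟙 (P.X 1) - r ≫ p = P.d 1 0 ≫ a + (0 : P.X 1 ⟶ P.X 2) ≫ P.d 2 1
      simp [hrp]
    | Int.ofNat (n + 1) =>
      change 𝟙 (P.X _) - 𝟙 (P.X _) ≫ 𝟙 (P.X _) = _ ≫ 0 + 0 ≫ _
      simp
    | -1 =>
      change 𝟙 (P.X 0) - b ≫ f = P.d 0 (-1) ≫ (0 : P.X (-1) ⟶ P.X 0) + a ≫ P.d 1 0
      simp [hab']
    | Int.negSucc (n + 1) =>
      exact (hneg _ (by omega)).eq_of_tgt _ _
  · let hC : C.X 0 ⟶ C.X 1 := h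
    refine (Homotopy.equivSubZero.symm (Homotopy.trans (Homotopy.ofEq ?_)
      (Homotopy.nullHomotopy' (bottomFamily hC)))).symm
    ext i
    -- Indexing by `i + 1` makes both neighbouring differentials of the form `d (k + 1) k`.
    obtain ⟨i, rfl⟩ : ∃ k, i = k + 1 := ⟨i - 1, by ring⟩
    rw [nullHomotopicMap_bottomFamily, hd, hd]
    match i with
    | 0 =>
      change 𝟙 K - p ≫ r = q ≫ h + (0 : K ⟶ P.X 2) ≫ j
      apply sq.hom_ext
      · simp [hrp, hhp, sq.w_assoc]
      · simp [hrq, hhq, sq.w_assoc]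
    | Int.ofNat (n + 1) =>
      have e : 𝟙 (P.X (Int.ofNat (n + 2))) - 𝟙 _ ≫ 𝟙 _ = 0 := by simp
      exact e.trans ((congrArg₂ (· + ·) comp_zero zero_comp).trans (add_zero 0)).symm
    | -1 =>
      change 𝟙 L - f ≫ b = (0 : L ⟶ P.X (-1)) ≫ (0 : P.X (-1) ⟶ L) + h ≫ q
      simp [hhq]
    | Int.negSucc (n + 1) =>
      have e : Int.negSucc (n + 1) + 1 = Int.negSucc n := by omega
      have : IsZero (C.X (Int.negSucc (n + 1) + 1)) := by
        rw [e]; exact hneg _ (Int.negSucc_lt_zero n)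
      exact this.eq_of_tgt _ _

end Categorical

/-! ### Smallness of the group -/

/-- If the group ring of `π` has a nonzero projective module in a universe, then `π` is small for
that universe: for a suitable `x` in the module, the orbit map `g ↦ g x` has finite fibres. -/
theorem small_of_nontrivial_projective {π : Type u} [Group π] (M : Type v) [AddCommGroup M]
    [Module (MonoidAlgebra ℤ π) M] [Module.Projective (MonoidAlgebra ℤ π) M] [Nontrivial M] :
    Small.{v} π := by
  obtain ⟨x, hx⟩ := exists_ne (0 : M)
  obtain ⟨s, hs⟩ := Module.projective_def.1 ‹Module.Projective (MonoidAlgebra ℤ π) M›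
  obtain ⟨y, hy⟩ : ∃ y, s x y ≠ 0 := by
    by_contra! h
    have : s x = 0 := Finsupp.ext h
    exact hx (by rw [← hs x, this, map_zero])
  -- A linear form not vanishing at `x`.
  let φ : M →ₗ[MonoidAlgebra ℤ π] MonoidAlgebra ℤ π := Finsupp.lapply y ∘ₗ s
  obtain ⟨k, hk⟩ : ∃ k, (φ x).coeff k ≠ 0 := by
    by_contra! h
    exact hy (MonoidAlgebra.coeff_injective (Finsupp.ext h))
  let t (g : π) : M := MonoidAlgebra.single g (1 : ℤ) • x
  -- `g x = m` forces `g k` to be in the finite support of `φ m`.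
  have hfib (m : M) : Finite {g // t g = m} := by
    let ι : {g // t g = m} → {l // (φ m).coeff l ≠ 0} := fun g => ⟨g.1 * k, by
      have hg : φ m = MonoidAlgebra.single g.1 1 * φ x := by
        rw [← smul_eq_mul, ← map_smul]
        exact congrArg φ g.2.symm
      rw [hg]
      simpa using hk⟩
    have : Finite {l // (φ m).coeff l ≠ 0} := by
      simpa using (φ m).coeff.hasFiniteSupport.to_subtype
    refine Finite.of_injective ι fun g g' h => ?_
    simpa [ι, Subtype.ext_iff] using h
  exact small_map (Equiv.sigmaFiberEquiv t).symm

theorem small_intGroupRing (π : Type u) [Small.{v} π] : Small.{v} (MonoidAlgebra ℤ π) :=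
  small_of_injective (β := π → ℤ) (f := fun c g => c.coeff g) fun _ _ h =>
    MonoidAlgebra.coeff_injective (Finsupp.ext (congrFun h))

/-! ### The module-theoretic part -/

/-- If `P₋₁ = 0` and `H₀(P)` is infinite cyclic, then `P₀` is generated by the boundaries and one
more element. -/
theorem exists_generator_mod_boundaries {R : Type u} [Ring R]
    (P : ChainComplex (ModuleCat.{v} R) ℤ)
    (hneg : IsZero (P.X (-1))) (e : P.homology 0 ≃+ ℤ) :
    ∃ x₀ : P.X 0, ∀ x : P.X 0, ∃ (y : P.X 1) (n : ℤ), x = P.d 1 0 y + n • x₀ := by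
  have hp : (ComplexShape.down ℤ).prev 0 = 1 := by simp
  have hn : (ComplexShape.down ℤ).next 0 = -1 := by simp
  have hd : P.d 0 (-1) = 0 := hneg.eq_of_tgt _ _
  let S : ShortComplex (ModuleCat.{v} R) := .mk (P.toCycles 1 0) (P.homologyπ 0) (by simp)
  have hS : S.Exact := S.exact_of_g_is_cokernel (P.homologyIsCokernel 1 0 hp)
  have hsurj : Function.Surjective (P.homologyπ 0) :=
    (ModuleCat.epi_iff_surjective _).1 inferInstance
  have : IsIso (P.iCycles 0) := P.isIso_iCycles 0 (-1) hn hd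
  obtain ⟨z₀, hz₀⟩ := hsurj (e.symm 1)
  refine ⟨P.iCycles 0 z₀, fun x => ?_⟩
  obtain ⟨z, rfl⟩ := ((ModuleCat.epi_iff_surjective (P.iCycles 0)).1 inferInstance) x
  let n := e (P.homologyπ 0 z)
  have hz : P.homologyπ 0 (z - n • z₀) = 0 := by
    apply e.injective
    simp [hz₀, n]
  obtain ⟨y, hy⟩ := (ShortComplex.moduleCat_exact_iff S).1 hS _ hz
  refine ⟨y, n, ?_⟩
  have h : P.d 1 0 y = P.iCycles 0 (z - n • z₀) := by
    rw [← hy, ← P.toCycles_i 1 0]; rfl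
  rw [h, map_sub, map_zsmul, sub_add_cancel]

/-- Let `π` be a group and `N ≥ 1`.  Let `P` be a chain complex of left
`ℤπ`-modules of type FP supported in `[0, N]` with `H₀(P)` infinite cyclic as an abelian
group.  Then `P` is chain homotopy equivalent to a chain complex `C` of type FP supported in
`[0, N]` with `C₀` a free `ℤπ`-module of rank 1. -/
theorem chainComplex_H0_infinite_cyclic_bottom_free_rank_one
    {π : Type*} [Group π] (N : ℤ) (hN : 1 ≤ N)
    (P : ChainComplex (ModuleCat (MonoidAlgebra ℤ π)) ℤ)
    (hproj : ∀ i : ℤ, Module.Projective (MonoidAlgebra ℤ π) (P.X i))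
    (hfin : ∀ i : ℤ, Module.Finite (MonoidAlgebra ℤ π) (P.X i))
    (hsupp : ∀ i : ℤ, i < 0 ∨ N < i → IsZero (P.X i))
    (hH0 : Nonempty ((P.homology 0) ≃+ ℤ)) :
    ∃ C : ChainComplex (ModuleCat (MonoidAlgebra ℤ π)) ℤ,
      (∀ i : ℤ, Module.Projective (MonoidAlgebra ℤ π) (C.X i)) ∧
      (∀ i : ℤ, Module.Finite (MonoidAlgebra ℤ π) (C.X i)) ∧
      (∀ i : ℤ, i < 0 ∨ N < i → IsZero (C.X i)) ∧
      Nonempty ((C.X 0) ≃ₗ[MonoidAlgebra ℤ π] MonoidAlgebra ℤ π) ∧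
      Nonempty (HomotopyEquiv P C) := by
  obtain ⟨e⟩ := hH0
  obtain ⟨x₀, hx₀⟩ := exists_generator_mod_boundaries P (hsupp _ (by omega)) e
  have : Nontrivial (P.X 0) := by
    by_contra hnt
    rw [not_nontrivial_iff_subsingleton] at hnt
    have hz : IsZero (P.homology 0) := ShortComplex.isZero_homology_of_isZero_X₂ (P.sc 0)
      (ModuleCat.isZero_of_subsingleton (P.X 0))
    have := ModuleCat.subsingleton_of_isZero hz
    exact zero_ne_one (e.symm.injective (Subsingleton.elim (e.symm 0) (e.symm 1)))
  have hπ := small_of_nontrivial_projective (π := π) (P.X 0)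
  have hΛ := small_intGroupRing π
  let Λ := MonoidAlgebra ℤ π
  -- A copy of `Λ` in the universe of the modules of `P`.
  let L := Shrink Λ
  let eL : L ≃ₗ[Λ] Λ := Shrink.linearEquiv Λ Λ
  let f : L →ₗ[Λ] P.X 0 := LinearMap.toSpanSingleton Λ _ x₀ ∘ₗ eL.toLinearMap
  let d : P.X 1 →ₗ[Λ] P.X 0 := (P.d 1 0).hom
  have : Module.Projective Λ L := Module.Projective.of_equiv eL.symm
  have : Module.Finite Λ L := Module.Finite.equiv eL.symm
  have hsurj : Function.Surjective (d.coprod f) := by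
    intro x
    obtain ⟨y, n, rfl⟩ := hx₀ x
    refine ⟨(y, eL.symm n), ?_⟩
    simp [d, f, Int.cast_smul_eq_zsmul]
  obtain ⟨s, hs⟩ := Module.projective_lifting_property (d.coprod f) LinearMap.id hsurj
  let a : P.X 0 →ₗ[Λ] P.X 1 := LinearMap.fst Λ _ _ ∘ₗ s
  let b : P.X 0 →ₗ[Λ] L := LinearMap.snd Λ _ _ ∘ₗ s
  have hab (x : P.X 0) : d (a x) + f (b x) = x := LinearMap.congr_fun hs x
  let K : Submodule Λ (P.X 1 × L) := LinearMap.eqLocus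
    (d ∘ₗ LinearMap.fst Λ _ _) (f ∘ₗ LinearMap.snd Λ _ _)
  -- `ret = 1 - (a, -b) ∘ (d, -f)`, the projection of `P₁ ⊕ L` onto `K` along the image of the
  -- section `(a, -b)` of `(d, -f)`.
  let ret : P.X 1 × L →ₗ[Λ] K := LinearMap.codRestrict K
    ((LinearMap.fst Λ _ _ - a ∘ₗ (d.coprod (-f))).prod
      (LinearMap.snd Λ _ _ + b ∘ₗ (d.coprod (-f)))) (by
      rintro ⟨y, l⟩
      have h := hab (d y - f l)
      change d (y - a (d y + -f l)) = f (l + b (d y + -f l))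
      rw [← sub_eq_add_neg, map_sub, map_add, sub_eq_iff_eq_add, add_comm (f l), add_right_comm,
        add_comm (f _), h, sub_add_cancel])
  have hret : ret ∘ₗ K.subtype = LinearMap.id := by
    refine LinearMap.ext fun ⟨⟨y, l⟩, hy⟩ => Subtype.ext ?_
    have hy : d y = f l := hy
    change (y - a (d y + -f l), l + b (d y + -f l)) = (y, l)
    simp [hy]
  have hKp : Module.Projective Λ K := Module.Projective.of_split K.subtype ret hret
  have hKf : Module.Finite Λ K := Module.Finite.of_surjective ret
    (fun k => ⟨k.1, LinearMap.congr_fun hret k⟩)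
  let p : K →ₗ[Λ] P.X 1 := LinearMap.fst Λ _ _ ∘ₗ K.subtype
  let q : K →ₗ[Λ] L := LinearMap.snd Λ _ _ ∘ₗ K.subtype
  have sq : IsPullback (ModuleCat.ofHom p) (ModuleCat.ofHom q) (P.d 1 0) (ModuleCat.ofHom f) := by
    refine ⟨⟨by ext k; exact k.2⟩, ⟨PullbackCone.IsLimit.mk _
      (fun t => ModuleCat.ofHom (LinearMap.codRestrict K (t.fst.hom.prod t.snd.hom)
        (fun z => ConcreteCategory.congr_hom t.condition z))) ?_ ?_ ?_⟩⟩
    · intro t; rfl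
    · intro t; rfl
    · intro t m h₁ h₂
      exact ModuleCat.hom_ext (LinearMap.ext fun z => Subtype.ext (Prod.ext
        (ConcreteCategory.congr_hom h₁ z) (ConcreteCategory.congr_hom h₂ z)))
  obtain ⟨C, hX, hC⟩ := exists_homotopyEquiv_replaceBottom P (fun i hi => hsupp i (.inl hi)) sq
    (ModuleCat.ofHom a) (ModuleCat.ofHom b) (by ext x; exact hab x)
  refine ⟨C, ?_, ?_, ?_, ?_, hC⟩
  all_goals rw [hX]
  · rintro ((_ | _ | n) | n)
    · change Module.Projective Λ L; infer_instance
    · exact hKp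
    · exact hproj _
    · exact hproj _
  · rintro ((_ | _ | n) | n)
    · change Module.Finite Λ L; infer_instance
    · exact hKf
    · exact hfin _
    · exact hfin _
  · rintro ((_ | _ | n) | n) hi
    · simp at hi; omega
    · simp at hi; omega
    · exact hsupp _ hi
    · exact hsupp _ hi
  · exact ⟨eL⟩
end

section
/- Let k ≥ 0 be an integer and let G = ℤ^k be the free abelian group of rank k. Regard the integral group ring ℤ[G] as a representation of G over ℤ via left multiplication. Then the group cohomology H^i(G; ℤ[G]) is an infinite cyclic abelian group when i = k and vanishes for all i ≠ k. -/
/-!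
Write `G = ℤᵏ` and let `Mⱼ = ℤ[ℤᵏ / ⟨e₀, …, eⱼ₋₁⟩]`, a permutation module on which the first `j`
coordinates act trivially. Then `M₀ = ℤ[G]`, `M_k = ℤ`, and with `t = eⱼ` there are short exact
sequences `0 ⟶ Mⱼ ⟶ Mⱼ ⟶ Mⱼ₊₁ ⟶ 0` whose first map is multiplication by `t - 1` (`M_shortExact`,
an instance of `permMap_shortExact`).

Since `G` is abelian, the action of `t` on a coefficient module `B` induces on `Extⁿ(ℤ, B)` the same
map as the action of `t` on `ℤ`, that is, the identity (`ext_trivial_comp_sub`). Hence `t - 1` acts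
as zero, the long exact sequence breaks up, and `Extⁿ⁺¹(ℤ, Mⱼ)` is `Extⁿ(ℤ, Mⱼ₊₁)` as long as the
groups `Extⁱ(ℤ, Mⱼ₊₁)` with `i < n` vanish (`ext_step`). Descending from `Hom(ℤ, M_k) = ℤ` gives
`Extᵏ(ℤ, ℤ[G]) ≅ ℤ` and the vanishing of the lower groups (`ext_M`).

For the higher groups, the same sequences read upwards from the projective module `M₀` show that
`M_k = ℤ` has projective dimension at most `k` (`M_hasProjectiveDimensionLT`).

Group cohomology agrees with `Ext` out of the trivial module
(`nonempty_groupCohomology_addEquiv_ext`): in positive degrees both are cocycles modulo coboundaries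
for a projective resolution, and in degree `0` both are the invariants.
-/

namespace FreeAbelianCohomology

open CategoryTheory Abelian

noncomputable section

section Ext

/-! ### Exactness and `Ext` in the category of representations -/

variable {k G : Type} [CommRing k]

instance [Group G] : HasExt.{0} (Rep.{0} k G) := hasExt_of_enoughProjectives _

lemma rep_exact [Group G] (S : ShortComplex (Rep.{0} k G))
    (h : ∀ x, S.g.hom x = 0 → ∃ y, S.f.hom y = x) : S.Exact := by
  apply (forget₂ (Rep.{0} k G) (ModuleCat.{0} k)).reflects_exact_of_faithful
  rw [ShortComplex.moduleCat_exact_iff]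
  exact h

/-- For abelian `G`, the action of `g` on the second variable of `Extⁿ(A, B)` agrees with its action
on the first variable: acting by `g` commutes with every map of representations, hence lifts to a
projective resolution of `A` degreewise. -/
lemma ext_comp_applyAsHom [CommGroup G] {A B : Rep.{0} k G} (g : G) {n : ℕ} (e : Ext A B n) :
    e.comp (Ext.mk₀ (B.applyAsHom g)) (add_zero n) =
      (Ext.mk₀ (A.applyAsHom g)).comp e (zero_add n) := by
  let P := ProjectiveResolution.of A
  let φ : ProjectiveResolution.Hom P P (A.applyAsHom g) :=
    { hom := { f := fun i => (P.complex.X i).applyAsHom g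
               comm' := fun i j _ => Rep.applyAsHom_comm _ _ }
      hom_f_zero_comp_π_f_zero := Rep.applyAsHom_comm (P.π.f 0) g }
  obtain ⟨f, hf, rfl⟩ := P.extMk_surjective e (n + 1) rfl
  rw [ProjectiveResolution.extMk_comp_mk₀, ProjectiveResolution.mk₀_comp_extMk _ _ _ _ φ]
  congr 1
  exact (Rep.applyAsHom_comm f g).symm

/-- The augmentation ideal kills `Extⁿ(k, B)` when `G` is abelian. -/
lemma ext_trivial_comp_sub [CommGroup G] {B : Rep.{0} k G} (g : G) {n : ℕ}
    (e : Ext (Rep.trivial k G k) B n) :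
    e.comp (Ext.mk₀ (B.applyAsHom g - 𝟙 B)) (add_zero n) = 0 := by
  have h1 : (Rep.trivial k G k).applyAsHom g = 𝟙 _ := by ext; simp [Rep.applyAsHom]
  rw [sub_eq_add_neg, Ext.mk₀_add, Ext.mk₀_neg, Ext.comp_add, Ext.comp_neg, ext_comp_applyAsHom, h1]
  simp

end Ext

section SES

/-! ### Permutation modules -/

variable {G X Y : Type} [CommGroup G] [MulAction G X] [MulAction G Y]

/-- The map of permutation modules `ℤ[X] ⟶ ℤ[Y]` induced by an equivariant map `q : X → Y`. -/
def permMap (q : X → Y) (hq : ∀ (g : G) x, q (g • x) = g • q x) :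
    Rep.ofMulAction ℤ G X ⟶ Rep.ofMulAction ℤ G Y :=
  Rep.ofHom (ρ := Representation.ofMulAction ℤ G X) (σ := Representation.ofMulAction ℤ G Y)
    ⟨MonoidAlgebra.mapDomainLinearMap ℤ ℤ q, fun g => MonoidAlgebra.lhom_ext' fun x => by
      ext
      simp [Representation.ofMulAction_single, hq]⟩

lemma permMap_single (q : X → Y) (hq : ∀ (g : G) x, q (g • x) = g • q x) (x : X) (r : ℤ) :
    (permMap q hq).hom (MonoidAlgebra.single x r : MonoidAlgebra ℤ X) =
      (MonoidAlgebra.single (q x) r : MonoidAlgebra ℤ Y) :=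
  MonoidAlgebra.mapDomainLinearMap_single ..

/-- The isomorphism `ℤ[X] ≅ ℤ[Y]` induced by an equivariant bijection. -/
def permIso (e : X ≃ Y) (he : ∀ (g : G) x, e (g • x) = g • e x) :
    Rep.ofMulAction ℤ G X ≅ Rep.ofMulAction ℤ G Y :=
  have he' (g : G) (y : Y) : e.symm (g • y) = g • e.symm y := by
    rw [Equiv.symm_apply_eq, he, Equiv.apply_symm_apply]
  { hom := permMap e he
    inv := permMap e.symm he'
    hom_inv_id := by
      ext : 2
      refine MonoidAlgebra.lhom_ext' fun x => LinearMap.ext_ring ?_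
      change (permMap e.symm he').hom ((permMap e he).hom (MonoidAlgebra.single x 1)) =
        MonoidAlgebra.single x 1
      rw [permMap_single, permMap_single, Equiv.symm_apply_apply]
    inv_hom_id := by
      ext : 2
      refine MonoidAlgebra.lhom_ext' fun x => LinearMap.ext_ring ?_
      change (permMap e he).hom ((permMap e.symm he').hom (MonoidAlgebra.single x 1)) =
        MonoidAlgebra.single x 1
      rw [permMap_single, permMap_single, Equiv.apply_symm_apply] }

lemma applyAsHom_sub_one_apply (t : G) (f : MonoidAlgebra ℤ X) :
    ((Rep.ofMulAction ℤ G X).applyAsHom t - 𝟙 _).hom f =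
      (Representation.ofMulAction ℤ G X t f - f : MonoidAlgebra ℤ X) := rfl

/-- If all orbits of `t` on `X` are infinite, a `t`-invariant element of `ℤ[X]` has coefficients
constant along infinite orbits, so it is zero by finiteness of its support. -/
lemma applyAsHom_sub_one_injective (t : G) (ht : ∀ (x : X) (n : ℤ), t ^ n • x = x → n = 0) :
    Function.Injective ((Rep.ofMulAction ℤ G X).applyAsHom t - 𝟙 _).hom := by
  rw [injective_iff_map_eq_zero]
  intro (f : MonoidAlgebra ℤ X) hf
  rw [applyAsHom_sub_one_apply, sub_eq_zero] at hf
  have h1 (x : X) : f.coeff (t • x) = f.coeff x := by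
    conv_lhs => rw [← hf]
    rw [Representation.coeff_ofMulAction, inv_smul_smul]
  have h2 (x : X) (n : ℕ) : f.coeff (t ^ n • x) = f.coeff x := by
    induction n with
    | zero => simp
    | succ n ih => rw [pow_succ', mul_smul, h1, ih]
  ext x
  by_contra hx
  refine Set.infinite_of_injective_forall_mem (f := fun n : ℕ => t ^ n • x) ?_
    (s := (f.coeff.support : Set X)) ?_ (Finset.finite_toSet _)
  · intro m n hmn
    have := ht x (m - n) (by
      rw [sub_eq_neg_add, zpow_add, mul_smul, zpow_natCast, show t ^ m • x = t ^ n • x from hmn]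
      simp)
    omega
  · intro n
    simp only [Finset.mem_coe, Finsupp.mem_support_iff]
    rw [h2]
    exact hx

/-- Points of one `t`-orbit become equal modulo the image of `t - 1`. -/
lemma single_sub_single_mem_range (t : G) (n : ℤ) (x : X) (r : ℤ) :
    ∃ f : MonoidAlgebra ℤ X, Representation.ofMulAction ℤ G X t f - f =
      MonoidAlgebra.single (t ^ n • x) r - MonoidAlgebra.single x r := by
  induction n with
  | zero => exact ⟨0, by simp⟩
  | succ n ih =>
    obtain ⟨f, hf⟩ := ih
    refine ⟨f + MonoidAlgebra.single (t ^ (n : ℤ) • x) r, ?_⟩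
    rw [map_add, Representation.ofMulAction_single, add_sub_add_comm, hf, ← mul_smul, zpow_add_one,
      mul_comm t]
    abel
  | pred n ih =>
    obtain ⟨f, hf⟩ := ih
    refine ⟨f - MonoidAlgebra.single (t ^ (-(n : ℤ) - 1) • x) r, ?_⟩
    rw [map_sub, Representation.ofMulAction_single, sub_sub_sub_comm, hf, ← mul_smul, zpow_sub_one,
      mul_comm t, inv_mul_cancel_right]
    abel

/-- If `q : X → Y` is the quotient by a free action of `⟨t⟩`, with a section `s`, then
`0 ⟶ ℤ[X] ⟶ ℤ[X] ⟶ ℤ[Y] ⟶ 0`, with first map `t - 1`, is exact. -/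
lemma permMap_shortExact (q : X → Y) (hq : ∀ (g : G) x, q (g • x) = g • q x) (s : Y → X)
    (hs : ∀ y, q (s y) = y) (t : G) (htq : ∀ y : Y, t • y = y)
    (ht : ∀ (x : X) (n : ℤ), t ^ n • x = x → n = 0)
    (hx : ∀ x, ∃ n : ℤ, x = t ^ n • s (q x)) :
    ∃ w, (ShortComplex.mk ((Rep.ofMulAction ℤ G X).applyAsHom t - 𝟙 _) (permMap q hq) w).ShortExact
    := by
  have w : ((Rep.ofMulAction ℤ G X).applyAsHom t - 𝟙 _) ≫ permMap q hq = 0 := by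
    have : (Rep.ofMulAction ℤ G Y).applyAsHom t = 𝟙 _ := by
      ext : 2
      refine MonoidAlgebra.lhom_ext' fun y => ?_
      refine LinearMap.ext_ring ?_
      change Representation.ofMulAction ℤ G Y t (MonoidAlgebra.single y 1) = MonoidAlgebra.single y 1
      rw [Representation.ofMulAction_single, htq]
    rw [Preadditive.sub_comp, Rep.applyAsHom_comm, this, Category.comp_id, Category.id_comp,
      sub_self]
  refine ⟨w, ?_⟩
  have := (Rep.mono_iff_injective _).2 (applyAsHom_sub_one_injective t ht)
  have : Epi (permMap q hq) := by
    refine (Rep.epi_iff_surjective _).2 ?_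
    intro (f : MonoidAlgebra ℤ Y)
    induction f using MonoidAlgebra.induction_linear with
    | zero => exact ⟨0, map_zero (permMap q hq).hom⟩
    | add f g hf hg =>
      obtain ⟨a, rfl⟩ := hf
      obtain ⟨b, rfl⟩ := hg
      exact ⟨a + b, map_add (permMap q hq).hom a b⟩
    | single y r => exact ⟨_, (permMap_single q hq (s y) r).trans (by rw [hs])⟩
  refine { exact := ?_, mono_f := ‹_›, epi_g := ‹_› }
  refine rep_exact _ ?_
  intro (f : MonoidAlgebra ℤ X) hf
  change MonoidAlgebra.mapDomainLinearMap ℤ ℤ q f = 0 at hf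
  -- Modulo the image of `t - 1`, every element agrees with its image under `s ∘ q`.
  have key : ∀ f : MonoidAlgebra ℤ X, ∃ a : MonoidAlgebra ℤ X,
      Representation.ofMulAction ℤ G X t a - a = f - MonoidAlgebra.mapDomainLinearMap ℤ ℤ s
        (MonoidAlgebra.mapDomainLinearMap ℤ ℤ q f) := by
    intro f
    induction f using MonoidAlgebra.induction_linear with
    | zero => exact ⟨0, by simp⟩
    | add f g hf hg =>
      obtain ⟨a, ha⟩ := hf
      obtain ⟨b, hb⟩ := hg
      refine ⟨a + b, ?_⟩
      rw [map_add, add_sub_add_comm, ha, hb, map_add, map_add, add_sub_add_comm]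
    | single x r =>
      obtain ⟨n, hn⟩ := hx x
      obtain ⟨a, ha⟩ := single_sub_single_mem_range t n (s (q x)) r
      refine ⟨a, ?_⟩
      rw [← hn] at ha
      rw [ha, MonoidAlgebra.mapDomainLinearMap_single, MonoidAlgebra.mapDomainLinearMap_single]
  obtain ⟨a, ha⟩ := key f
  rw [hf, map_zero, sub_zero] at ha
  exact ⟨a, ha⟩

end SES

section Step

/-! ### Dimension shifting -/

variable {C : Type*} [Category C] [Abelian C] [HasExt.{0} C]

/-- Dimension shifting along `0 ⟶ A ⟶ A ⟶ B ⟶ 0` when the first map `f` induces zero on all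
`Extⁿ(T, A)`: the connecting maps `Extⁱ(T, B) ⟶ Extⁱ⁺¹(T, A)` are then surjective, and injective
where `Extⁱ(T, A)` vanishes. -/
lemma ext_step {T A B : C} {f : A ⟶ A} {g : A ⟶ B} {w : f ≫ g = 0}
    (hS : (ShortComplex.mk f g w).ShortExact)
    (hz : ∀ (n : ℕ) (e : Ext T A n), e.comp (Ext.mk₀ f) (add_zero n) = 0) (d : ℕ)
    (hB : ∀ i < d, Subsingleton (Ext T B i)) (hd : Nonempty (Ext T B d ≃+ ℤ)) :
    (∀ i < d + 1, Subsingleton (Ext T A i)) ∧ Nonempty (Ext T A (d + 1) ≃+ ℤ) := by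
  have hsurj (n : ℕ) : Function.Surjective (hS.extClass.postcomp T (rfl : n + 1 = n + 1)) := by
    intro x
    obtain ⟨y, hy⟩ := Ext.covariant_sequence_exact₁ T hS x (hz _ x) (rfl : n + 1 = n + 1)
    exact ⟨y, hy⟩
  have hA : ∀ i < d + 1, Subsingleton (Ext T A i) := by
    rintro (_ | i) hi
    · have := hS.mono_f
      refine ⟨fun x y => Ext.postcomp_mk₀_injective_of_mono T f ?_⟩
      exact (hz 0 x).trans (hz 0 y).symm
    · have := hB i (by omega)
      exact (hsurj i).subsingleton
  refine ⟨hA, hd.map fun e => (AddEquiv.ofBijective _ ⟨?_, hsurj d⟩).symm.trans e⟩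
  rw [injective_iff_map_eq_zero]
  intro x hx
  obtain ⟨y, hy⟩ := Ext.covariant_sequence_exact₃ T hS x rfl hx
  have := hA d (by omega)
  rw [← hy, Subsingleton.elim y 0, Ext.zero_comp]

end Step

section Coord

/-! ### The modules interpolating between `ℤ[G]` and `ℤ` -/

variable {k : ℕ}

/-- The group `ℤᵏ`, written multiplicatively. -/
abbrev Z (k : ℕ) : Type := Multiplicative (Fin k → ℤ)

/-- The quotient of `ℤᵏ` by its first `j` coordinates, encoded as the functions on the remaining
coordinates, on which `ℤᵏ` acts by translation. -/
def Coord (k j : ℕ) : Type := {i : Fin k // j ≤ i.val} → ℤ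

instance (j : ℕ) : MulAction (Z k) (Coord k j) where
  smul g x := fun i => g.toAdd i.1 + x i
  one_smul _ := funext fun _ => zero_add _
  mul_smul _ _ _ := funext fun _ => add_assoc _ _ _

lemma smul_coord_apply {j : ℕ} (g : Z k) (x : Coord k j) (i) :
    (g • x) i = g.toAdd i.1 + x i := rfl

/-- The permutation module `ℤ[ℤᵏ / ⟨e₀, …, eⱼ₋₁⟩]`. -/
def M (k j : ℕ) : Rep.{0} ℤ (Z k) := Rep.ofMulAction ℤ (Z k) (Coord k j)

lemma M_shortExact (j : ℕ) (hj : j < k) :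
    ∃ (t : Z k) (g : M k j ⟶ M k (j + 1)) (w : ((M k j).applyAsHom t - 𝟙 _) ≫ g = 0),
      (ShortComplex.mk _ g w).ShortExact := by
  let a : Fin k := ⟨j, hj⟩
  let t : Z k := Multiplicative.ofAdd (Pi.single a 1)
  have htn (n : ℤ) (i : Fin k) : (t ^ n).toAdd i = if i = a then n else 0 := by
    simp [t, toAdd_zpow, Pi.single_apply]
  let q : Coord k j → Coord k (j + 1) := fun x i => x ⟨i.1, by have := i.2; omega⟩
  let s : Coord k (j + 1) → Coord k j := fun y i => if h : j + 1 ≤ i.1.val then y ⟨i.1, h⟩ else 0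
  refine (permMap_shortExact (G := Z k) q (fun _ _ => rfl) s
    (fun y => funext fun i => dif_pos i.2) t ?_ ?_ ?_).elim fun w h => ⟨t, _, w, h⟩
  · intro y
    funext i
    have h1 := htn 1 i.1
    have : i.1 ≠ a := fun h => by have := i.2; simp [h, a] at this
    rw [zpow_one, if_neg this] at h1
    rw [smul_coord_apply, h1, zero_add]
  · intro x n hn
    have := congrFun hn ⟨a, le_rfl⟩
    rw [smul_coord_apply, htn, if_pos rfl] at this
    omega
  · intro x
    refine ⟨x ⟨a, le_rfl⟩, ?_⟩
    funext i
    rw [smul_coord_apply, htn]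
    by_cases hi : i.1 = a
    · obtain ⟨i, hi'⟩ := i
      obtain rfl : i = a := hi
      simp [s, a]
    · have : j + 1 ≤ i.1.val := by
        have := i.2
        have : i.1.val ≠ j := fun h => hi (Fin.ext h)
        omega
      rw [if_neg hi, zero_add]
      have hs : s (q x) i = x i := dif_pos this
      exact hs.symm

/-- `M₀` is the group ring. -/
def M_zero_iso : M k 0 ≅ Rep.leftRegular ℤ (Z k) :=
  permIso (X := Coord k 0) (Y := Z k)
    { toFun x := Multiplicative.ofAdd fun i => x ⟨i, Nat.zero_le _⟩
      invFun g := fun i => g.toAdd i.1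
      left_inv _ := rfl
      right_inv _ := rfl } fun _ _ => rfl

/-- `M_k` is the trivial module, being free on a one-point set. -/
def M_top_iso : M k k ≅ Rep.trivial ℤ (Z k) ℤ :=
  have : IsEmpty {i : Fin k // k ≤ i.val} := ⟨fun i => by have := i.2; omega⟩
  have : Unique (Coord k k) := Pi.uniqueOfIsEmpty _
  permIso (X := Coord k k) (Y := Fin 0 → Z k) (Equiv.ofUnique _ _)
      (fun _ _ => Subsingleton.elim _ _) ≪≫
    Rep.ofMulActionSubsingletonIsoTrivial ℤ (Z k) (Fin 0 → Z k)

end Coord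

section Compare

/-! ### Group cohomology and `Ext` -/

variable {k G : Type} [CommRing k] [Group G]

lemma nonempty_addEquiv_of_ker_eq {Z H E : Type*} [AddCommGroup Z] [AddCommGroup H]
    [AddCommGroup E] (f : Z →+ H) (g : Z →+ E) (hf : Function.Surjective f)
    (hg : Function.Surjective g) (h : ∀ z, f z = 0 ↔ g z = 0) : Nonempty (H ≃+ E) :=
  ⟨((QuotientAddGroup.quotientKerEquivOfSurjective f hf).symm.trans
    (QuotientAddGroup.quotientAddEquivOfEq (show f.ker = g.ker from AddSubgroup.ext h))).trans
    (QuotientAddGroup.quotientKerEquivOfSurjective g hg)⟩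

/-- In positive degree, group cohomology and `Ext` are both cocycles modulo coboundaries in
`Hom(P, A)`, for `P` a projective resolution of the trivial module. -/
lemma nonempty_groupCohomology_succ_addEquiv_ext (A : Rep.{0} k G) (n : ℕ) :
    Nonempty (groupCohomology A (n + 1) ≃+ Ext (Rep.trivial k G k) A (n + 1)) := by
  let P := ProjectiveResolution.of (Rep.trivial k G k)
  let K := P.complex.linearYonedaObj k A
  let S := K.sc' n (n + 1) (n + 2)
  let e : S.moduleCatLeftHomologyData.H ≅ groupCohomology A (n + 1) :=
    S.moduleCatHomologyIso.symm ≪≫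
      (ShortComplex.homologyMapIso (K.isoSc' n (n + 1) (n + 2) (by simp) (by simp))).symm ≪≫
      (groupCohomologyIso A (n + 1) P).symm
  have hc (z : LinearMap.ker S.g.hom) : P.complex.d (n + 2) (n + 1) ≫ z.1 = 0 := z.2
  refine nonempty_addEquiv_of_ker_eq (Z := LinearMap.ker S.g.hom)
    (e.toLinearEquiv.toLinearMap ∘ₗ Submodule.mkQ _).toAddMonoidHom
    { toFun z := P.extMk (n := n + 1) (z.1 : P.complex.X (n + 1) ⟶ A) (n + 2) rfl (hc z)
      map_zero' := ?_
      map_add' x y := ?_ } ?_ ?_ ?_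
  · exact P.extMk_zero _ _
  · exact (P.add_extMk _ _ _ _ _ _).symm
  · exact e.toLinearEquiv.surjective.comp (Submodule.mkQ_surjective _)
  · intro x
    obtain ⟨f, hf, rfl⟩ := P.extMk_surjective x (n + 2) rfl
    exact ⟨⟨f, hf⟩, rfl⟩
  · intro z
    refine Iff.trans ?_ (P.extMk_eq_zero_iff _ (n + 2) rfl (hc z) n rfl).symm
    refine (map_eq_zero_iff _ e.toLinearEquiv.injective).trans ?_
    refine (Submodule.Quotient.mk_eq_zero _).trans ?_
    refine LinearMap.mem_range.trans (exists_congr fun y => ?_)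
    exact Subtype.ext_iff

/-- `H⁰(G; A)` is the group of invariants of `A`, i.e. of maps from the trivial module to `A`. -/
def groupCohomologyZeroAddEquivExt (A : Rep.{0} k G) :
    groupCohomology A 0 ≃+ Ext (Rep.trivial k G k) A 0 :=
  (groupCohomology.H0Iso A).toLinearEquiv.toAddEquiv.trans (AddEquiv.trans
    { toFun x := Rep.ofHom (ρ := Representation.trivial k G k) (σ := A.ρ)
        ⟨LinearMap.toSpanSingleton k A x.1, fun g => LinearMap.ext_ring <| by
          have := x.2 g
          simpa using this.symm⟩
      invFun f := ⟨f.hom (1 : k), fun g => by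
        exact (Rep.hom_comm_apply f g (1 : k)).symm⟩
      left_inv x := Subtype.ext (one_smul k x.1)
      right_inv f := by
        ext : 2
        exact LinearMap.ext_ring (one_smul k _)
      map_add' x y := by
        ext : 2
        refine LinearMap.ext_ring ?_
        exact smul_add (1 : k) x.1 y.1 }
    Ext.addEquiv₀.symm)

lemma nonempty_groupCohomology_addEquiv_ext (A : Rep.{0} k G) (n : ℕ) :
    Nonempty (groupCohomology A n ≃+ Ext (Rep.trivial k G k) A n) := by
  cases n with
  | zero => exact ⟨groupCohomologyZeroAddEquivExt A⟩
  | succ n => exact nonempty_groupCohomology_succ_addEquiv_ext A n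

end Compare

section Compute

/-! ### The groups `Extⁱ(ℤ, ℤ[G])` -/

/-- Endomorphisms of the trivial module `ℤ` are multiplications by integers. -/
def endTrivialEquiv (G : Type) [Group G] :
    (Rep.trivial ℤ G ℤ ⟶ Rep.trivial ℤ G ℤ) ≃+ ℤ where
  toFun f := f.hom (1 : ℤ)
  invFun n := n • 𝟙 _
  left_inv f := by
    ext : 2
    refine LinearMap.ext_ring ?_
    change f.hom (1 : ℤ) • (1 : ℤ) = f.hom (1 : ℤ)
    exact mul_one (f.hom (1 : ℤ))
  right_inv n := by
    change n • (1 : ℤ) = n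
    simp
  map_add' _ _ := rfl

/-- With `d = k - j`, the groups `Extⁱ(ℤ, Mⱼ)` vanish for `i < d` and `Extᵈ(ℤ, Mⱼ)` is infinite
cyclic. -/
lemma ext_M (k d : ℕ) : ∀ j, j + d = k →
    (∀ i < d, Subsingleton (Ext (Rep.trivial ℤ (Z k) ℤ) (M k j) i)) ∧
      Nonempty (Ext (Rep.trivial ℤ (Z k) ℤ) (M k j) d ≃+ ℤ) := by
  induction d with
  | zero =>
    rintro j rfl
    refine ⟨fun i hi => absurd hi (Nat.not_lt_zero i), ⟨Ext.addEquiv₀.trans ?_⟩⟩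
    exact AddEquiv.trans
      { (M_top_iso (k := j)).homToEquiv with map_add' := fun _ _ => Preadditive.add_comp .. }
      (endTrivialEquiv _)
  | succ d ih =>
    intro j hj
    obtain ⟨t, g, w, hS⟩ := M_shortExact (k := k) j (by omega)
    obtain ⟨h1, h2⟩ := ih (j + 1) (by omega)
    exact ext_step hS (fun n e => ext_trivial_comp_sub t e) d h1 h2

lemma M_hasProjectiveDimensionLT (k j : ℕ) (hj : j ≤ k) :
    HasProjectiveDimensionLT (M k j) (j + 1) := by
  induction j with
  | zero =>
    have : Projective (M k 0) := Projective.of_iso M_zero_iso.symm inferInstance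
    exact inferInstance
  | succ j ih =>
    obtain ⟨t, g, w, hS⟩ := M_shortExact (k := k) j (by omega)
    have := ih (by omega)
    exact hS.hasProjectiveDimensionLT_X₃ (j + 1) this
      (hasProjectiveDimensionLT_of_ge (M k j) (j + 1) (j + 2) (by omega))

/-- Functoriality of `Ext` in an isomorphism of the second variable. -/
def extAddEquivOfIso {C : Type*} [Category C] [Abelian C] [HasExt.{0} C] (T : C) {A B : C}
    (e : A ≅ B) (n : ℕ) : Ext T A n ≃+ Ext T B n where
  toFun x := x.comp (Ext.mk₀ e.hom) (add_zero n)
  invFun x := x.comp (Ext.mk₀ e.inv) (add_zero n)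
  left_inv x := by simp
  right_inv x := by simp
  map_add' x y := Ext.add_comp ..

lemma ext_leftRegular (k : ℕ) :
    Nonempty (Ext (Rep.trivial ℤ (Z k) ℤ) (Rep.leftRegular ℤ (Z k)) k ≃+ ℤ) ∧
    ∀ i, i ≠ k → Subsingleton (Ext (Rep.trivial ℤ (Z k) ℤ) (Rep.leftRegular ℤ (Z k)) i) := by
  obtain ⟨h1, ⟨h2⟩⟩ := ext_M k k 0 (zero_add k)
  refine ⟨⟨(extAddEquivOfIso _ M_zero_iso k).symm.trans h2⟩, fun i hi => ?_⟩
  rcases hi.lt_or_gt with hi | hi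
  · have := h1 i hi
    exact (extAddEquivOfIso _ M_zero_iso i).symm.subsingleton
  · have := M_hasProjectiveDimensionLT k k le_rfl
    have := hasProjectiveDimensionLT_of_iso (M_top_iso (k := k)) (k + 1)
    exact ⟨fun x y => (Ext.eq_zero_of_hasProjectiveDimensionLT x (k + 1) hi).trans
      (Ext.eq_zero_of_hasProjectiveDimensionLT y (k + 1) hi).symm⟩

end Compute

end

end FreeAbelianCohomology

/-- For `G = ℤᵏ`, the group cohomology `Hⁱ(G; ℤ[G])` of `G` with
coefficients in its own group ring (the left regular representation) is infinite cyclic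
for `i = k` and vanishes for `i ≠ k`. -/
theorem groupCohomology_free_abelian_leftRegular (k : ℕ) :
    Nonempty
      ((groupCohomology (Rep.leftRegular ℤ (Multiplicative (Fin k → ℤ))) k) ≃+ ℤ) ∧
    ∀ i : ℕ, i ≠ k →
      Subsingleton (groupCohomology (Rep.leftRegular ℤ (Multiplicative (Fin k → ℤ))) i) := by
  obtain ⟨⟨h1⟩, h2⟩ := FreeAbelianCohomology.ext_leftRegular k
  refine ⟨(FreeAbelianCohomology.nonempty_groupCohomology_addEquiv_ext _ k).map
    fun e => e.trans h1, fun i hi => ?_⟩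
  obtain ⟨e⟩ := FreeAbelianCohomology.nonempty_groupCohomology_addEquiv_ext
    (Rep.leftRegular ℤ (Multiplicative (Fin k → ℤ))) i
  have := h2 i hi
  exact e.subsingleton
end
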